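/- Let X be a long space (a Hausdorff space in which every σ-compact subset has compact closure) and let E be a Banach space over ℝ or ℂ. Then the vector space C_cpt(X, E) of continuous compactly supported maps X → E, equipped with the supremum norm ‖f‖ = sup_{x ∈ X} ‖f(x)‖, is a Banach space; in particular it is complete. -/

import Mathlib

open TopologicalSpace BoundedContinuousFunction

variable (X : Type*) [TopologicalSpace X] [T2Space X]
variable (𝕜 : Type*) [RCLike 𝕜]
variable (E : Type*) [NormedAddCommGroup E] [NormedSpace 𝕜 E] [CompleteSpace E]

/-- The space `C_cpt(X, E)` of continuous compactly supported `E`-valued maps on `X`, realized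
as the submodule of the bounded continuous functions `X →ᵇ E` (so that it carries the
supremum norm) consisting of the compactly supported ones. -/
def CcptSubmodule : Submodule 𝕜 (BoundedContinuousFunction X E) where
  carrier := {f | IsCompact (closure {x | f x ≠ 0})}
  zero_mem' := by
    show IsCompact (closure {x : X | (0 : BoundedContinuousFunction X E) x ≠ 0})
    have : {x : X | (0 : BoundedContinuousFunction X E) x ≠ 0} = ∅ := by ext x; simp
    rw [this, closure_empty]
    exact isCompact_empty
  add_mem' := by
    intro f g hf hg
    refine (hf.union hg).of_isClosed_subset isClosed_closure ?_
    rw [← closure_union]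
    refine closure_mono fun x hx => ?_
    by_contra hc
    simp only [Set.mem_union, Set.mem_setOf_eq, not_or, not_not] at hc
    exact hx (by simp [hc.1, hc.2])
  smul_mem' := by
    intro c f hf
    refine hf.of_isClosed_subset isClosed_closure ?_
    refine closure_mono fun x hx => ?_
    simp only [Set.mem_setOf_eq, coe_smul, Pi.smul_apply] at hx ⊢
    intro h
    exact hx (by rw [h, smul_zero])

/-- Let `X` be a long space (every σ-compact subset has compact closure) and
`E` a Banach space over `ℝ` or `ℂ`. Then `C_cpt(X, E)`, the space of continuous compactly
supported maps `X → E` with the supremum norm, is a Banach space: it is a complete normed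
space, its norm is `‖f‖ = sup_x ‖f x‖`, and every continuous compactly supported map `X → E`
belongs to it. -/
theorem ccpt_banach_of_long
    (hlong : ∀ A : Set X,
      (∃ K : ℕ → Set X, (∀ n, IsCompact (K n)) ∧ A = ⋃ n, K n) → IsCompact (closure A)) :
    CompleteSpace (CcptSubmodule X 𝕜 E) ∧
      (∀ f : CcptSubmodule X 𝕜 E,
        ‖f‖ = ⨆ x : X, ‖(f : BoundedContinuousFunction X E) x‖) ∧
      (∀ g : X → E, Continuous g → IsCompact (closure {x | g x ≠ 0}) →
        ∃ f : CcptSubmodule X 𝕜 E, ⇑(f : BoundedContinuousFunction X E) = g) := by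
  refine ⟨?_, ?_, ?_⟩
  · have hcl : IsClosed (CcptSubmodule X 𝕜 E : Set (BoundedContinuousFunction X E)) := by
      refine IsSeqClosed.isClosed ?_
      intro u f hu hlim
      have hA := hlong (⋃ n, closure {x | u n x ≠ 0}) ⟨_, fun n => hu n, rfl⟩
      refine hA.of_isClosed_subset isClosed_closure (closure_mono fun x hx => ?_)
      by_contra hc
      simp only [Set.mem_iUnion, not_exists] at hc
      have h0 : ∀ n, u n x = 0 := by
        intro n
        by_contra hn
        exact hc n (subset_closure hn)
      have hx' : Filter.Tendsto (fun n => u n x) Filter.atTop (nhds (f x)) :=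
        ((continuous_eval_const (F := BoundedContinuousFunction X E) x).tendsto f).comp hlim
      simp only [h0] at hx'
      exact hx (tendsto_nhds_unique hx' tendsto_const_nhds)
    exact hcl.completeSpace_coe
  · intro f
    exact BoundedContinuousFunction.norm_eq_iSup_norm (f : BoundedContinuousFunction X E)
  · intro g hg hc
    have hc' : HasCompactSupport g := hc
    obtain ⟨C, hC⟩ := hc'.exists_bound_of_continuous hg
    exact ⟨⟨BoundedContinuousFunction.ofNormedAddCommGroup g hg C hC, hc⟩, rfl⟩
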